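/- For n ≥ 2, the number of bicolored Motzkin paths of length n satisfying both restrictions (no umber horizontal step at height zero, no denim horizontal step before the first down step) equals the number of 321-avoiding permutations of [n-1]. -/

import Mathlib

inductive BStep : Type
  | U | D | Hu | Hd
deriving DecidableEq

def BStep.h : BStep → ℤ
  | .U => 1
  | .D => -1
  | .Hu => 0
  | .Hd => 0

/-- The height reached by a path (list of steps). -/
def hsum (p : List BStep) : ℤ := (p.map BStep.h).sum

/-- The path never goes below the x-axis. -/
def NonNegPath (p : List BStep) : Prop := ∀ k : ℕ, 0 ≤ hsum (p.take k)

/-- Restriction (1): no umber horizontal step occurs at height zero. -/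
def Res1 (p : List BStep) : Prop :=
  ∀ (i : ℕ) (hi : i < p.length), p.get ⟨i, hi⟩ = BStep.Hu → 0 < hsum (p.take i)

/-- Restriction (2): no denim horizontal step occurs before the first down step. -/
def Res2 (p : List BStep) : Prop :=
  ∀ (i : ℕ) (hi : i < p.length), p.get ⟨i, hi⟩ = BStep.Hd →
    ∃ (j : ℕ) (hj : j < p.length), j < i ∧ p.get ⟨j, hj⟩ = BStep.D

/-- A bicolored Motzkin path of length `n`: from (0,0) to (n,0), never below the x-axis. -/
def IsBMotzkin (n : ℕ) (p : List BStep) : Prop :=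
  p.length = n ∧ hsum p = 0 ∧ NonNegPath p

/-- A permutation is 321-avoiding if it has no decreasing subsequence of length 3. -/
def Avoids321 {n : ℕ} (π : Equiv.Perm (Fin n)) : Prop :=
  ¬ ∃ i j k : Fin n, i < j ∧ j < k ∧ π k < π j ∧ π j < π i

/-- `π i` is a right-to-left minimum of `π`. -/
def IsRLMin {n : ℕ} (π : Equiv.Perm (Fin n)) (i : Fin n) : Prop :=
  ∀ j : Fin n, i < j → π i < π j

/-!
Both sides are Catalan numbers, reached through ballot numbers, which count `±1`-paths descending
to height `0`. When a Motzkin path is read from left to right, its possible continuations depend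
only on the current height and on whether a down step has occurred; encoding the steps as pairs of
`±1`-steps turns these continuations into ballot paths. When a permutation is read from left to
right, a first value `a` constrains the rest by requiring the values below `a` to be in increasing
order. The number `A m b` of 321-avoiding permutations of `Fin m` whose values below `b` increase
satisfies `A (m + 1) (b + 1) = A m b + A (m + 1) (b + 2)` for `b < m`, which is the ballot
recurrence.
-/

/-- The number of nonnegative paths with `n` steps `±1` from height `k` to height `0`; these are
the ballot numbers. -/
def ballot : ℕ → ℕ → ℕ
  | 0, 0 => 1
  | 0, _ + 1 => 0
  | n + 1, 0 => ballot n 1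
  | n + 1, k + 1 => ballot n k + ballot n (k + 2)

theorem ballot_zero_left (k : ℕ) : ballot 0 k = if k = 0 then 1 else 0 := by
  cases k <;> rfl

theorem ballot_succ_zero (n : ℕ) : ballot (n + 1) 0 = ballot n 1 := rfl

theorem ballot_succ_succ (n k : ℕ) :
    ballot (n + 1) (k + 1) = ballot n k + ballot n (k + 2) := rfl

theorem ballot_eq_zero_of_lt {n k : ℕ} (h : n < k) : ballot n k = 0 := by
  induction n generalizing k with
  | zero => rw [ballot_zero_left, if_neg (by lia)]
  | succ n ih =>
    obtain ⟨k, rfl⟩ := Nat.exists_eq_succ_of_ne_zero (Nat.ne_zero_of_lt h)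
    rw [Nat.succ_eq_add_one, ballot_succ_succ, ih (by lia), ih (by lia)]

theorem ballot_self (k : ℕ) : ballot k k = 1 := by
  induction k with
  | zero => rfl
  | succ k ih => rw [ballot_succ_succ, ih, ballot_eq_zero_of_lt (by lia)]

-- The reflection principle: paths of length `k + 2 * r` from `k` to `0` have `k + r` down steps,
-- and those that touch `-1` are equinumerous with the paths from `k` to `-2`.
theorem ballot_add_choose : ∀ r k : ℕ,
    ballot (k + 2 * r) k + (k + 2 * r).choose (k + r + 1) = (k + 2 * r).choose (k + r)
  | 0, k => by simp [ballot_self]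
  | r + 1, 0 => by
    have ih := ballot_add_choose r 1
    have half := Nat.choose_symm_half r
    rw [show 0 + 2 * (r + 1) = 1 + 2 * r + 1 by ring, ballot_succ_zero, zero_add,
      Nat.choose_succ_succ', Nat.choose_succ_succ']
    grind
  | r + 1, k + 1 => by
    have ih₁ := ballot_add_choose (r + 1) k
    have ih₂ := ballot_add_choose r (k + 2)
    rw [show k + 1 + 2 * (r + 1) = k + 2 * (r + 1) + 1 by ring, ballot_succ_succ,
      Nat.choose_succ_succ', show k + 1 + (r + 1) = k + (r + 1) + 1 by ring,
      Nat.choose_succ_succ']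
    grind

theorem ballot_two_mul_zero (m : ℕ) : ballot (2 * m) 0 = catalan m := by
  have reflection : ballot (2 * m) 0 + (2 * m).choose (m + 1) = (2 * m).choose m := by
    simpa using ballot_add_choose m 0
  have ratio : (2 * m).choose (m + 1) * (m + 1) = (2 * m).choose m * m := by
    rw [Nat.choose_succ_right_eq, two_mul, Nat.add_sub_cancel]
  refine Nat.eq_of_mul_eq_mul_left m.succ_pos ?_
  rw [Nat.succ_eq_add_one, succ_mul_catalan_eq_centralBinom, Nat.centralBinom_eq_two_mul_choose]
  linear_combination (m + 1) * reflection - ratio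

theorem card_subtype_eq_sum_of_bijective {ι β γ : Type*} [Fintype ι] [Finite β] {f : ι → β → γ}
    (hf : Function.Bijective fun x : ι × β => f x.1 x.2) (Q : γ → Prop) :
    Nat.card {c // Q c} = ∑ i, Nat.card {b // Q (f i b)} :=
  calc Nat.card {c // Q c}
    _ = Nat.card {x : ι × β // Q (f x.1 x.2)} :=
      (Nat.card_congr ((Equiv.ofBijective _ hf).subtypeEquiv fun _ => Iff.rfl)).symm
    _ = Nat.card (Σ i, {b // Q (f i b)}) :=
      Nat.card_congr (Equiv.subtypeProdEquivSigmaSubtype fun i b => Q (f i b))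
    _ = ∑ i, Nat.card {b // Q (f i b)} := Nat.card_sigma

theorem bijective_vector_cons (α : Type*) (n : ℕ) :
    Function.Bijective fun x : α × List.Vector α n => x.1 ::ᵥ x.2 := by
  refine ⟨fun x y h => Prod.ext ?_ ?_, fun v => ?_⟩
  · simpa using congrArg List.Vector.head h
  · simpa using congrArg List.Vector.tail h
  · obtain ⟨a, w, rfl⟩ := v.exists_eq_cons
    exact ⟨(a, w), rfl⟩

instance : Fintype BStep where
  elems := {.U, .D, .Hu, .Hd}
  complete c := by cases c <;> decide

theorem BStep.sum_univ {M : Type*} [AddCommMonoid M] (f : BStep → M) :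
    ∑ c, f c = f .U + (f .D + (f .Hu + f .Hd)) := by
  change ∑ c ∈ ({.U, .D, .Hu, .Hd} : Finset BStep), f c = _
  simp

theorem hsum_nil : hsum [] = 0 := rfl

theorem hsum_cons (c : BStep) (p : List BStep) : hsum (c :: p) = c.h + hsum p :=
  List.sum_cons

/-- `NonNegPath` for a path starting at height `h`. -/
def NonNegFrom (h : ℤ) (p : List BStep) : Prop := ∀ k : ℕ, 0 ≤ h + hsum (p.take k)

/-- `Res1` for a path starting at height `h`. -/
def Res1From (h : ℤ) (p : List BStep) : Prop :=
  ∀ (i : ℕ) (hi : i < p.length), p[i] = BStep.Hu → 0 < h + hsum (p.take i)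

/-- `Res2` for the remainder of a path, where `d` records whether a down step has already
occurred. -/
def Res2After (d : Bool) (p : List BStep) : Prop :=
  ∀ (i : ℕ) (hi : i < p.length), p[i] = BStep.Hd →
    d ∨ ∃ (j : ℕ) (hj : j < p.length), j < i ∧ p[j] = BStep.D

theorem nonNegFrom_nil {h : ℤ} : NonNegFrom h [] ↔ 0 ≤ h := by
  simp [NonNegFrom, hsum_nil]

theorem nonNegFrom_cons {h : ℤ} {c : BStep} {p : List BStep} :
    NonNegFrom h (c :: p) ↔ 0 ≤ h ∧ NonNegFrom (h + c.h) p := by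
  rw [NonNegFrom, ← Nat.and_forall_add_one]
  simp [NonNegFrom, hsum_nil, hsum_cons, add_assoc]

theorem res1From_nil (h : ℤ) : Res1From h [] := by
  simp [Res1From]

theorem res1From_cons {h : ℤ} {c : BStep} {p : List BStep} :
    Res1From h (c :: p) ↔ (c = .Hu → 0 < h) ∧ Res1From (h + c.h) p := by
  rw [Res1From, ← Nat.and_forall_add_one]
  simp [Res1From, hsum_nil, hsum_cons, add_assoc]

theorem res2After_nil (d : Bool) : Res2After d [] := by
  simp [Res2After]

theorem res2After_cons {d : Bool} {c : BStep} {p : List BStep} :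
    Res2After d (c :: p) ↔ (c = .Hd → d) ∧ Res2After (d || c = .D) p := by
  rw [Res2After, ← Nat.and_forall_add_one]
  simp only [← Nat.or_exists_add_one (p := fun j => ∃ _ : j < (c :: p).length, _)]
  simp [Res2After, or_assoc]

/-- `p` completes a path that has reached height `h` to a bicolored Motzkin path satisfying both
restrictions, where `d` records whether a down step has already occurred. -/
def IsTail (d : Bool) (h : ℤ) (p : List BStep) : Prop :=
  h + hsum p = 0 ∧ NonNegFrom h p ∧ Res1From h p ∧ Res2After d p

theorem isBMotzkin_and_res1_and_res2_iff {n : ℕ} {p : List BStep} :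
    IsBMotzkin n p ∧ Res1 p ∧ Res2 p ↔ p.length = n ∧ IsTail false 0 p := by
  simp [IsBMotzkin, Res1, Res2, NonNegPath, IsTail, NonNegFrom, Res1From, Res2After, and_assoc]

theorem isTail_nil {d : Bool} {h : ℤ} : IsTail d h [] ↔ h = 0 := by
  simp +contextual [IsTail, hsum_nil, nonNegFrom_nil, res1From_nil, res2After_nil]

theorem isTail_cons {d : Bool} {h : ℤ} {c : BStep} {p : List BStep} :
    IsTail d h (c :: p) ↔
      (0 ≤ h ∧ (c = .Hu → 0 < h) ∧ (c = .Hd → d)) ∧ IsTail (d || c = .D) (h + c.h) p := by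
  simp only [IsTail, hsum_cons, nonNegFrom_cons, res1From_cons, res2After_cons, add_assoc]
  tauto

theorem IsTail.nonneg {d : Bool} {h : ℤ} {p : List BStep} (hp : IsTail d h p) : 0 ≤ h := by
  simpa [hsum_nil] using hp.2.1 0

/-- The number of tails of length `n` from height `h`, in the sense of `IsTail`. -/
noncomputable def countTails (d : Bool) (n : ℕ) (h : ℤ) : ℕ :=
  Nat.card {v : List.Vector BStep n // IsTail d h v.toList}

theorem countTails_zero (d : Bool) (h : ℕ) : countTails d 0 h = ballot 0 h := by
  have toList_nil (v : List.Vector BStep 0) : v.toList = [] := by simp [v.eq_nil]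
  simp only [countTails, toList_nil, isTail_nil, Nat.cast_eq_zero, ballot_zero_left]
  split_ifs with hh <;> simp [hh]

theorem countTails_of_neg (d : Bool) (n : ℕ) {h : ℤ} (hh : h < 0) : countTails d n h = 0 := by
  have : IsEmpty {v : List.Vector BStep n // IsTail d h v.toList} :=
    ⟨fun v => hh.not_ge v.2.nonneg⟩
  exact Nat.card_of_isEmpty

theorem countTails_succ (d : Bool) (n : ℕ) (h : ℤ) :
    countTails d (n + 1) h =
      ∑ c : BStep, if 0 ≤ h ∧ (c = .Hu → 0 < h) ∧ (c = .Hd → d) then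
        countTails (d || c = .D) n (h + c.h) else 0 := by
  rw [countTails, card_subtype_eq_sum_of_bijective (bijective_vector_cons BStep n)]
  refine Finset.sum_congr rfl fun c _ => ?_
  simp only [List.Vector.toList_cons, isTail_cons]
  split_ifs with hc
  · exact Nat.card_congr (Equiv.subtypeEquivRight fun _ => and_iff_right hc)
  · simp only [hc, false_and, Nat.card_of_isEmpty]

theorem countTails_succ_zero (d : Bool) (n : ℕ) :
    countTails d (n + 1) (0 : ℕ) =
      countTails d n (1 : ℕ) + if d then countTails d n (0 : ℕ) else 0 := by
  simp [countTails_succ, BStep.sum_univ, BStep.h, countTails_of_neg]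

theorem countTails_succ_succ (d : Bool) (n h : ℕ) :
    countTails d (n + 1) (h + 1 : ℕ) =
      countTails d n (h + 2 : ℕ) + countTails true n h + countTails d n (h + 1 : ℕ) +
        if d then countTails d n (h + 1 : ℕ) else 0 := by
  have nonneg : (0 : ℤ) ≤ h + 1 := by positivity
  have pos : (0 : ℤ) < h + 1 := by positivity
  simp [countTails_succ, BStep.sum_univ, BStep.h, nonneg, pos, add_assoc, one_add_one_eq_two]

-- Replacing `U`, `D`, `Hu`, `Hd` by up-up, down-down, down-up, up-down turns the tails that follow
-- a down step into `±1`-paths of twice the length and height.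
theorem countTails_true (n h : ℕ) : countTails true n h = ballot (2 * n) (2 * h) := by
  induction n generalizing h with
  | zero => simp [countTails_zero, ballot_zero_left]
  | succ n ih =>
    cases h with
    | zero =>
      rw [countTails_succ_zero, if_pos rfl, ih, ih, mul_add_one, ballot_succ_zero, mul_zero,
        ballot_succ_succ, add_comm]
    | succ h =>
      rw [countTails_succ_succ, if_pos rfl, ih, ih, ih]
      simp only [mul_add, ballot_succ_succ]
      ring_nf

-- Before the first down step only `U`, `Hu` and `D` are available; here they become up-up, up-down
-- and a single down, which accounts for the odd length and height.
theorem countTails_false_succ_succ (n h : ℕ) :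
    countTails false (n + 1) (h + 1 : ℕ) = ballot (2 * n + 1) (2 * h + 1) := by
  induction n generalizing h with
  | zero =>
    rw [countTails_succ_succ, countTails_zero, countTails_zero, countTails_zero]
    simp [ballot_succ_succ, ballot_zero_left]
  | succ n ih =>
    rw [countTails_succ_succ, ih, ih, countTails_true, if_neg Bool.false_ne_true, add_zero,
      ballot_succ_succ (2 * (n + 1)), mul_add_one 2 n, ballot_succ_succ _ (2 * h + 1)]
    ring_nf

theorem card_isBMotzkin_res1_res2 (m : ℕ) :
    Nat.card {p : List BStep // IsBMotzkin (m + 2) p ∧ Res1 p ∧ Res2 p} = catalan (m + 1) :=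
  calc Nat.card {p : List BStep // IsBMotzkin (m + 2) p ∧ Res1 p ∧ Res2 p}
    _ = countTails false (m + 2) (0 : ℕ) := by
      simp only [isBMotzkin_and_res1_and_res2_iff]
      exact (Nat.card_congr (Equiv.subtypeSubtypeEquivSubtypeInter _ _)).symm
    _ = countTails false (m + 1) (1 : ℕ) := countTails_succ_zero false (m + 1)
    _ = ballot (2 * (m + 1)) 0 := countTails_false_succ_succ m 0
    _ = catalan (m + 1) := ballot_two_mul_zero (m + 1)

/-- The permutation of `Fin (m + 1)` with first value `a` whose remaining values are in the same
relative order as those of `σ`. -/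
def consPerm {m : ℕ} (a : Fin (m + 1)) (σ : Equiv.Perm (Fin m)) : Equiv.Perm (Fin (m + 1)) :=
  (Equiv.Perm.decomposeFin.symm (0, σ)).trans a.cycleRange.symm

theorem consPerm_zero {m : ℕ} (a : Fin (m + 1)) (σ : Equiv.Perm (Fin m)) :
    consPerm a σ 0 = a := by
  simp [consPerm]

theorem consPerm_succ {m : ℕ} (a : Fin (m + 1)) (σ : Equiv.Perm (Fin m)) (i : Fin m) :
    consPerm a σ i.succ = a.succAbove (σ i) := by
  simp [consPerm]

theorem bijective_consPerm (m : ℕ) :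
    Function.Bijective fun x : Fin (m + 1) × Equiv.Perm (Fin m) => consPerm x.1 x.2 := by
  rw [Fintype.bijective_iff_injective_and_card]
  refine ⟨?_, by simp [Fintype.card_perm, Nat.factorial_succ]⟩
  rintro ⟨a, σ⟩ ⟨b, τ⟩ (h : consPerm a σ = consPerm b τ)
  obtain rfl : a = b := by rw [← consPerm_zero a σ, h, consPerm_zero]
  have : σ = τ := Equiv.ext fun i => Fin.succAbove_right_injective (p := a) <| by
    rw [← consPerm_succ, h, consPerm_succ]
  rw [this]

theorem succAbove_lt_self_iff {m : ℕ} (a : Fin (m + 1)) (x : Fin m) :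
    a.succAbove x < a ↔ (x : ℕ) < a := by
  rw [Fin.succAbove_lt_iff_castSucc_lt, Fin.lt_def, Fin.val_castSucc]

/-- The values less than `b` occur in increasing order in `σ`: the larger value of each inversion
is at least `b`. -/
def IncreasingBelow {m : ℕ} (b : ℕ) (σ : Equiv.Perm (Fin m)) : Prop :=
  ∀ i j, i < j → σ j < σ i → b ≤ (σ i : ℕ)

section IncreasingBelow

variable {m : ℕ} (σ : Equiv.Perm (Fin m))

theorem increasingBelow_of_le_one {b : ℕ} (hb : b ≤ 1) : IncreasingBelow b σ :=
  fun _ _ _ h => hb.trans (Nat.one_le_iff_ne_zero.2 (Nat.ne_zero_of_lt h))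

-- The first value `a` can only be the largest entry of a decreasing triple.
theorem avoids321_consPerm (a : Fin (m + 1)) :
    Avoids321 (consPerm a σ) ↔ Avoids321 σ ∧ IncreasingBelow a σ := by
  simp only [Avoids321, IncreasingBelow, Fin.exists_fin_succ, consPerm_zero, consPerm_succ,
    succAbove_lt_self_iff, Fin.succAbove_lt_succAbove_iff, Fin.succ_lt_succ_iff, Fin.succ_pos,
    Fin.not_lt_zero, false_and, and_false, true_and, exists_false, false_or]
  rw [not_or, and_comm]
  push Not
  rfl

theorem increasingBelow_consPerm {b : ℕ} (a : Fin (m + 1)) :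
    IncreasingBelow b (consPerm a σ) ↔
      (∀ j, (σ j : ℕ) < a → b ≤ a) ∧
        ∀ i j, i < j → σ j < σ i → b ≤ (a.succAbove (σ i) : ℕ) := by
  simp only [IncreasingBelow, Fin.forall_fin_succ, consPerm_zero, consPerm_succ,
    succAbove_lt_self_iff, Fin.succAbove_lt_succAbove_iff, Fin.succ_lt_succ_iff, Fin.succ_pos,
    Fin.not_lt_zero, false_imp_iff, true_imp_iff, true_and]

theorem increasingBelow_consPerm_zero {b : ℕ} :
    IncreasingBelow (b + 1) (consPerm 0 σ) ↔ IncreasingBelow b σ := by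
  rw [increasingBelow_consPerm]
  simp [IncreasingBelow]

theorem increasingBelow_consPerm_succ {b : ℕ} {a : Fin m} {σ : Equiv.Perm (Fin m)}
    (hσ : IncreasingBelow a.succ σ) :
    IncreasingBelow (b + 1) (consPerm a.succ σ) ↔ b ≤ a := by
  rw [increasingBelow_consPerm, Fin.val_succ, Nat.add_le_add_iff_right]
  refine ⟨fun h => ?_, fun hb => ⟨fun _ _ => hb, fun i j hij hlt => ?_⟩⟩
  · -- The leading value forms an inversion with the value `0`.
    have : NeZero m := ⟨a.pos.ne'⟩
    exact h.1 (σ.symm 0) (by simp)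
  · have above : a.succ ≤ (σ i).castSucc := hσ i j hij hlt
    rw [Fin.succAbove_of_le_castSucc _ _ above, Fin.val_succ, Nat.add_le_add_iff_right]
    exact (hb.trans a.val.le_succ).trans above

end IncreasingBelow

/-- The number of 321-avoiding permutations of `Fin m` whose values less than `b` occur in
increasing order. -/
noncomputable def countAvoids321 (m b : ℕ) : ℕ :=
  Nat.card {σ : Equiv.Perm (Fin m) // Avoids321 σ ∧ IncreasingBelow b σ}

theorem countAvoids321_of_le_one (m : ℕ) {b : ℕ} (hb : b ≤ 1) :
    countAvoids321 m b = Nat.card {σ : Equiv.Perm (Fin m) // Avoids321 σ} := by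
  simp [countAvoids321, increasingBelow_of_le_one _ hb]

theorem card_avoids321_increasingBelow_consPerm_zero (m b : ℕ) :
    Nat.card {σ : Equiv.Perm (Fin m) //
      Avoids321 (consPerm 0 σ) ∧ IncreasingBelow (b + 1) (consPerm 0 σ)} = countAvoids321 m b := by
  simp only [avoids321_consPerm, increasingBelow_consPerm_zero, countAvoids321, Fin.val_zero,
    increasingBelow_of_le_one _ zero_le_one, and_true]

theorem card_avoids321_increasingBelow_consPerm_succ {m : ℕ} (b : ℕ) (a : Fin m) :
    Nat.card {σ : Equiv.Perm (Fin m) //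
      Avoids321 (consPerm a.succ σ) ∧ IncreasingBelow (b + 1) (consPerm a.succ σ)} =
        if b ≤ a then countAvoids321 m (a + 1) else 0 := by
  have key (σ : Equiv.Perm (Fin m)) :
      Avoids321 (consPerm a.succ σ) ∧ IncreasingBelow (b + 1) (consPerm a.succ σ) ↔
        (Avoids321 σ ∧ IncreasingBelow (a + 1) σ) ∧ b ≤ a := by
    rw [avoids321_consPerm]
    exact and_congr_right fun hσ => increasingBelow_consPerm_succ hσ.2
  simp only [key]
  split_ifs with hb <;> simp [hb, countAvoids321]

theorem countAvoids321_succ_succ (m b : ℕ) :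
    countAvoids321 (m + 1) (b + 1) =
      countAvoids321 m b + ∑ a ∈ Finset.Ico b m, countAvoids321 m (a + 1) := by
  rw [countAvoids321, card_subtype_eq_sum_of_bijective (bijective_consPerm m), Fin.sum_univ_succ,
    card_avoids321_increasingBelow_consPerm_zero]
  simp only [card_avoids321_increasingBelow_consPerm_succ]
  rw [Fin.sum_univ_eq_sum_range fun a => if b ≤ a then countAvoids321 m (a + 1) else 0,
    ← Finset.sum_filter, Finset.range_eq_Ico, Finset.Ico_filter_le, Nat.zero_max]

theorem countAvoids321_self (m : ℕ) : countAvoids321 m m = 1 := by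
  induction m with
  | zero => simp [countAvoids321, Avoids321, IncreasingBelow]
  | succ m ih => rw [countAvoids321_succ_succ, ih, Finset.Ico_self, Finset.sum_empty, add_zero]

theorem countAvoids321_succ_of_lt {m b : ℕ} (h : b < m) :
    countAvoids321 (m + 1) (b + 1) = countAvoids321 m b + countAvoids321 (m + 1) (b + 2) := by
  rw [countAvoids321_succ_succ, countAvoids321_succ_succ m (b + 1),
    Finset.sum_eq_sum_Ico_succ_bot h]

theorem countAvoids321_add : ∀ r b : ℕ, countAvoids321 (b + r) b = ballot (b + 2 * r) b
  | 0, b => by simp [countAvoids321_self, ballot_self]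
  | r + 1, 0 => by
    rw [countAvoids321_of_le_one _ zero_le_one, ← countAvoids321_of_le_one _ le_rfl, zero_add,
      add_comm r 1, countAvoids321_add r 1, ← ballot_succ_zero]
    ring_nf
  | r + 1, b + 1 => by
    have first := countAvoids321_add (r + 1) b
    have second := countAvoids321_add r (b + 2)
    rw [show b + 1 + (r + 1) = b + (r + 1) + 1 by ring, countAvoids321_succ_of_lt (by lia), first,
      show b + (r + 1) + 1 = b + 2 + r by ring, second,
      show b + 1 + 2 * (r + 1) = b + 2 * (r + 1) + 1 by ring, ballot_succ_succ]
    ring_nf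

theorem card_avoids321 (m : ℕ) :
    Nat.card {σ : Equiv.Perm (Fin m) // Avoids321 σ} = catalan m := by
  rw [← countAvoids321_of_le_one m zero_le_one, ← ballot_two_mul_zero]
  simpa using countAvoids321_add m 0

theorem motzkin_res12_eq_avoids321 (n : ℕ) (hn : 2 ≤ n) :
    Nat.card {p : List BStep // IsBMotzkin n p ∧ Res1 p ∧ Res2 p} =
      Nat.card {π : Equiv.Perm (Fin (n - 1)) // Avoids321 π} := by
  obtain ⟨m, rfl⟩ := Nat.exists_eq_add_of_le' hn
  rw [card_isBMotzkin_res1_res2, card_avoids321]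
  rfl
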